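/- Under the assumptions that S contains samples of both classes (S^t and S^nt nonempty), that FS is not constant on S, and that γ is an integer with 1 ≤ γ ≤ |S|, there exists δ₁ > 0 such that the threshold c prescribed by the LHT splitting rule — namely c = minNFS if N₁ = N_max and N_max ≥ γ; c = maxNFS + δ₁ if N₂ = N_max and N_max ≥ γ; c = minTFS if N₃ = N_max and N_max ≥ γ; c = maxTFS + δ₁ if N₄ = N_max and N_max ≥ γ; and c = e if N_max < γ — always partitions S into two strictly nonempty subblocks B₁ = {j ∈ S | FS(j) < c} and B₂ = {j ∈ S | FS(j) ≥ c}. -/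

import Mathlib

open Finset

/-!
Both subblocks are nonempty exactly when `min FS < c ≤ max FS` over the whole block. A positive
count `Nᵢ` says that the corresponding extrema of the two classes are strictly ordered, which places
the threshold taken from one class in this interval once `δ₁` is at most the gap between the two
maxima. The threshold `e` averages four values of `[min FS, max FS]`, one of which is `max FS`; as
`FS` is not constant, the average exceeds `min FS`.
-/

theorem inf'_le_sup' {ι α : Type*} [Lattice α] {f : ι → α} {s : Finset ι} (hs : s.Nonempty) :
    s.inf' hs f ≤ s.sup' hs f :=
  hs.elim fun _ hj => (inf'_le f hj).trans (le_sup' f hj)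

section LinearOrder

variable {ι α : Type*} [LinearOrder α] {f : ι → α} {s t : Finset ι} {c : α}

/-- The threshold `c` splits the block `s` along `f` into two nonempty subblocks, the samples with
value below `c` and those with value at least `c`. -/
def IsSplittingThreshold (f : ι → α) (s : Finset ι) (c : α) : Prop :=
  (s.filter fun j => f j < c).Nonempty ∧ (s.filter fun j => c ≤ f j).Nonempty

theorem isSplittingThreshold_iff_inf'_lt_and_le_sup' (hs : s.Nonempty) :
    IsSplittingThreshold f s c ↔ s.inf' hs f < c ∧ c ≤ s.sup' hs f := by
  simp only [IsSplittingThreshold, filter_nonempty_iff, inf'_lt_iff, le_sup'_iff]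

theorem card_filter_lt_pos_iff_inf'_lt (hs : s.Nonempty) :
    0 < #{j ∈ s | f j < c} ↔ s.inf' hs f < c := by
  rw [card_pos, filter_nonempty_iff, inf'_lt_iff]

theorem card_filter_gt_pos_iff_lt_sup' (hs : s.Nonempty) :
    0 < #{j ∈ s | c < f j} ↔ c < s.sup' hs f := by
  rw [card_pos, filter_nonempty_iff, lt_sup'_iff]

theorem inf'_lt_sup'_of_exists_ne (hs : s.Nonempty) (hne : ∃ j ∈ s, ∃ k ∈ s, f j ≠ f k) :
    s.inf' hs f < s.sup' hs f := by
  obtain ⟨j, hj, k, hk, hjk⟩ := hne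
  rcases hjk.lt_or_gt with hlt | hlt
  · exact (inf'_le f hj).trans_lt (hlt.trans_le (le_sup' f hk))
  · exact (inf'_le f hk).trans_lt (hlt.trans_le (le_sup' f hj))

variable [DecidableEq ι]

theorem isSplittingThreshold_union_iff (hs : s.Nonempty) (ht : t.Nonempty) :
    IsSplittingThreshold f (s ∪ t) c ↔
      min (s.inf' hs f) (t.inf' ht f) < c ∧ c ≤ max (s.sup' hs f) (t.sup' ht f) := by
  rw [isSplittingThreshold_iff_inf'_lt_and_le_sup' (hs.mono subset_union_left),
    inf'_union hs ht, sup'_union hs ht]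

theorem isSplittingThreshold_union_inf' (hs : s.Nonempty) (ht : t.Nonempty)
    (hlt : s.inf' hs f < t.inf' ht f) : IsSplittingThreshold f (s ∪ t) (t.inf' ht f) :=
  (isSplittingThreshold_union_iff hs ht).2
    ⟨min_lt_of_left_lt hlt, le_max_of_le_right (inf'_le_sup' ht)⟩

theorem isSplittingThreshold_union_of_sup'_lt_of_le_sup' (hs : s.Nonempty) (ht : t.Nonempty)
    (hlt : t.sup' ht f < c) (hle : c ≤ s.sup' hs f) : IsSplittingThreshold f (s ∪ t) c :=
  (isSplittingThreshold_union_iff hs ht).2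
    ⟨min_lt_of_right_lt ((inf'_le_sup' ht).trans_lt hlt), le_max_of_le_left hle⟩

end LinearOrder

theorem exists_pos_add_le_of_lt {G : Type*} [AddCommGroup G] [LinearOrder G]
    [IsOrderedAddMonoid G] [Nontrivial G] (a b : G) :
    ∃ δ > 0, (a < b → a + δ ≤ b) ∧ (b < a → b + δ ≤ a) := by
  rcases lt_trichotomy a b with hab | rfl | hba
  · exact ⟨b - a, sub_pos.2 hab, fun _ => (add_sub_cancel a b).le, fun h => (h.not_gt hab).elim⟩
  · obtain ⟨δ, hδ⟩ := exists_zero_lt (α := G)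
    exact ⟨δ, hδ, fun h => (h.false).elim, fun h => (h.false).elim⟩
  · exact ⟨a - b, sub_pos.2 hba, fun h => (h.not_gt hba).elim, fun _ => (add_sub_cancel b a).le⟩

section Field

variable {ι K : Type*} [DecidableEq ι] [Field K] [LinearOrder K] [IsStrictOrderedRing K]

theorem isSplittingThreshold_union_average_extrema {f : ι → K} {s t : Finset ι}
    (hs : s.Nonempty) (ht : t.Nonempty) (hne : ∃ j ∈ s ∪ t, ∃ k ∈ s ∪ t, f j ≠ f k) :
    IsSplittingThreshold f (s ∪ t)
      ((t.inf' ht f + t.sup' ht f + s.inf' hs f + s.sup' hs f) / 4) := by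
  have hinf_lt_sup := inf'_lt_sup'_of_exists_ne (hs.mono subset_union_left) hne
  rw [inf'_union hs ht, sup'_union hs ht] at hinf_lt_sup
  have hs_le : s.inf' hs f ≤ s.sup' hs f := inf'_le_sup' hs
  have ht_le : t.inf' ht f ≤ t.sup' ht f := inf'_le_sup' ht
  have hmin_s : min (s.inf' hs f) (t.inf' ht f) ≤ s.inf' hs f := min_le_left _ _
  have hmin_t : min (s.inf' hs f) (t.inf' ht f) ≤ t.inf' ht f := min_le_right _ _
  rw [isSplittingThreshold_union_iff hs ht]
  constructor
  · rcases lt_max_iff.1 hinf_lt_sup with hlt | hlt <;> linarith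
  · have hmax_s : s.sup' hs f ≤ max (s.sup' hs f) (t.sup' ht f) := le_max_left _ _
    have hmax_t : t.sup' ht f ≤ max (s.sup' hs f) (t.sup' ht f) := le_max_right _ _
    linarith

theorem lht_splitting_guarantee_general (St Snt : Finset ι) (FS : ι → K)
    (hSt : St.Nonempty) (hSnt : Snt.Nonempty)
    (hnonconst : ∃ j ∈ St ∪ Snt, ∃ k ∈ St ∪ Snt, FS j ≠ FS k) :
    ∃ δ₁ > (0 : K), ∀ c : K,
      (0 < #{j ∈ St | FS j < Snt.inf' hSnt FS} ∧ c = Snt.inf' hSnt FS) ∨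
      (0 < #{j ∈ St | Snt.sup' hSnt FS < FS j} ∧ c = Snt.sup' hSnt FS + δ₁) ∨
      (0 < #{j ∈ Snt | FS j < St.inf' hSt FS} ∧ c = St.inf' hSt FS) ∨
      (0 < #{j ∈ Snt | St.sup' hSt FS < FS j} ∧ c = St.sup' hSt FS + δ₁) ∨
      c = (Snt.inf' hSnt FS + Snt.sup' hSnt FS + St.inf' hSt FS + St.sup' hSt FS) / 4 →
      IsSplittingThreshold FS (St ∪ Snt) c := by
  obtain ⟨δ, hδ, hδT, hδN⟩ := exists_pos_add_le_of_lt (St.sup' hSt FS) (Snt.sup' hSnt FS)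
  refine ⟨δ, hδ, fun c hc => ?_⟩
  simp only [card_filter_lt_pos_iff_inf'_lt hSt, card_filter_gt_pos_iff_lt_sup' hSt,
    card_filter_lt_pos_iff_inf'_lt hSnt, card_filter_gt_pos_iff_lt_sup' hSnt] at hc
  rcases hc with ⟨hlt, rfl⟩ | ⟨hlt, rfl⟩ | ⟨hlt, rfl⟩ | ⟨hlt, rfl⟩ | rfl
  · exact isSplittingThreshold_union_inf' hSt hSnt hlt
  · exact isSplittingThreshold_union_of_sup'_lt_of_le_sup' hSt hSnt
      (lt_add_of_pos_right _ hδ) (hδN hlt)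
  · exact union_comm Snt St ▸ isSplittingThreshold_union_inf' hSnt hSt hlt
  · exact union_comm Snt St ▸ isSplittingThreshold_union_of_sup'_lt_of_le_sup' hSnt hSt
      (lt_add_of_pos_right _ hδ) (hδT hlt)
  · exact isSplittingThreshold_union_average_extrema hSt hSnt hnonconst

end Field

/-- **Splitting Guarantee (Theorem 1 of LHT).** Under the assumptions that the block
contains samples of both classes, that the feature-weighted sums are not all identical,
and that `1 ≤ γ ≤ |S|`, there exists `δ₁ > 0` such that the threshold `c` prescribed by
the LHT splitting rule always partitions `S` into two strictly nonempty subblocks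
`B₁ = {j ∈ S | FS j < c}` and `B₂ = {j ∈ S | FS j ≥ c}`. -/
theorem lht_splitting_guarantee
    {ι : Type*} [DecidableEq ι]
    (St Snt : Finset ι) (FS : ι → ℝ)
    (hSt : St.Nonempty) (hSnt : Snt.Nonempty)
    (hdisj : Disjoint St Snt)
    (S : Finset ι) (hS : S = St ∪ Snt)
    (hnonconst : ∃ j ∈ S, ∃ k ∈ S, FS j ≠ FS k)
    (γ : ℕ) (hγ1 : 1 ≤ γ) (hγn : γ ≤ S.card)
    (minTFS maxTFS minNFS maxNFS e : ℝ)
    (hminT : minTFS = St.inf' hSt FS)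
    (hmaxT : maxTFS = St.sup' hSt FS)
    (hminN : minNFS = Snt.inf' hSnt FS)
    (hmaxN : maxNFS = Snt.sup' hSnt FS)
    (he : e = (minNFS + maxNFS + minTFS + maxTFS) / 4)
    (N₁ N₂ N₃ N₄ Nmax : ℕ)
    (hN₁ : N₁ = (St.filter (fun j => FS j < minNFS)).card)
    (hN₂ : N₂ = (St.filter (fun j => maxNFS < FS j)).card)
    (hN₃ : N₃ = (Snt.filter (fun j => FS j < minTFS)).card)
    (hN₄ : N₄ = (Snt.filter (fun j => maxTFS < FS j)).card)
    (hNmax : Nmax = max (max N₁ N₂) (max N₃ N₄)) :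
    ∃ δ₁ > (0 : ℝ), ∀ c : ℝ,
      ((N₁ = Nmax ∧ γ ≤ Nmax ∧ c = minNFS) ∨
       (N₂ = Nmax ∧ γ ≤ Nmax ∧ c = maxNFS + δ₁) ∨
       (N₃ = Nmax ∧ γ ≤ Nmax ∧ c = minTFS) ∨
       (N₄ = Nmax ∧ γ ≤ Nmax ∧ c = maxTFS + δ₁) ∨
       (Nmax < γ ∧ c = e)) →
      (S.filter (fun j => FS j < c)).Nonempty ∧
      (S.filter (fun j => c ≤ FS j)).Nonempty := by
  subst hS hminT hmaxT hminN hmaxN he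
  obtain ⟨δ, hδ, hsplit⟩ := lht_splitting_guarantee_general St Snt FS hSt hSnt hnonconst
  exact ⟨δ, hδ, fun c hc => hsplit c (by grind)⟩
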